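/- arXiv:2602.13822 — 2 statements merged into one kernel-verified Lean document; each statement's English description precedes it below -/
import Mathlib

section
/- (Liouville theorem under an abstract cutoff estimate; Proposition 1.2) Let n ≥ 1, s ∈ (0,1), and assume 1 < q ≤ n/(n−2s) if n > 2s, and 1 < q < ∞ if n ≤ 2s. Let u : ℝⁿ → [0,∞) be measurable with u ∈ L^q_loc(ℝⁿ) ∩ L¹_{2s}(ℝⁿ). Suppose there exist a constant C > 0 and, for each R > 0, a measurable function ψ_R : ℝⁿ → ℝ such that (i) |ψ_R(x)| ≤ C R^{−2s} for |x| < 2R and |ψ_R(x)| ≤ C Rⁿ |x|^{−n−2s} for |x| ≥ 2R, and (ii) ∫_{ℝⁿ} u(x) ψ_R(x) dx ≥ ∫_{ℝⁿ} u(x)^q η_R(x)² dx. Then u = 0 almost everywhere in ℝⁿ. -/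
open MeasureTheory Metric

noncomputable section

abbrev Euc (n : ℕ) := EuclideanSpace ℝ (Fin n)

def IsAdmissibleKernel (n : ℕ) (s lam Lam : ℝ) (K : Euc n → ℝ) : Prop :=
  0 < lam ∧ lam ≤ Lam ∧ Measurable K ∧
  (∀ z : Euc n, z ≠ 0 → K z = K (-z)) ∧
  (∀ z : Euc n, z ≠ 0 →
    lam * ‖z‖ ^ (-(n : ℝ) - 2 * s) ≤ K z ∧ K z ≤ Lam * ‖z‖ ^ (-(n : ℝ) - 2 * s))

def LK (n : ℕ) (K φ : Euc n → ℝ) (x : Euc n) : ℝ :=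
  (1 / 2) * ∫ z : Euc n, (2 * φ x - φ (x + z) - φ (x - z)) * K z

def IsTestFun (n : ℕ) (φ : Euc n → ℝ) : Prop :=
  ContDiff ℝ (⊤ : ℕ∞) φ ∧ HasCompactSupport φ

def MemL1Tail (n : ℕ) (s : ℝ) (u : Euc n → ℝ) : Prop :=
  LocallyIntegrable u volume ∧
  Integrable (fun x : Euc n => |u x| * (1 + ‖x‖) ^ (-(n : ℝ) - 2 * s)) volume

def MemLqLoc (n : ℕ) (q : ℝ) (u : Euc n → ℝ) : Prop :=
  ∀ R : ℝ, 0 < R → IntegrableOn (fun x : Euc n => u x ^ q) (ball (0 : Euc n) R) volume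

def IsWeakSupersol (n : ℕ) (s q : ℝ) (K u : Euc n → ℝ) : Prop :=
  Measurable u ∧ (∀ x, 0 ≤ u x) ∧ MemLqLoc n q u ∧ MemL1Tail n s u ∧
  ∀ φ : Euc n → ℝ, IsTestFun n φ → (∀ x, 0 ≤ φ x) →
    (∫ x : Euc n, u x ^ q * φ x) ≤ ∫ x : Euc n, u x * LK n K φ x

def IsCutoff (n : ℕ) (η : Euc n → ℝ) : Prop :=
  ContDiff ℝ (⊤ : ℕ∞) η ∧ (∀ x, 0 ≤ η x ∧ η x ≤ 1) ∧
  (∀ x : Euc n, ‖x‖ ≤ 1 → η x = 1) ∧ (∀ x : Euc n, 2 ≤ ‖x‖ → η x = 0)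

def cutoffSq (n : ℕ) (η : Euc n → ℝ) (R : ℝ) : Euc n → ℝ :=
  fun x => (η (R⁻¹ • x)) ^ 2

open scoped ENNReal

def wt (n : ℕ) (N R : ℝ) (x : Euc n) : ℝ≥0∞ := ENNReal.ofReal ((1 + ‖x‖ / R) ^ (-N))

lemma wt_meas (n : ℕ) (N R : ℝ) : Measurable (wt n N R) := by
  unfold wt; fun_prop

lemma wt_le_one (n : ℕ) (N R : ℝ) (hN : 0 < N) (hR : 0 < R) (x : Euc n) : wt n N R x ≤ 1 := by
  unfold wt
  rw [← ENNReal.ofReal_one]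
  apply ENNReal.ofReal_le_ofReal
  apply Real.rpow_le_one_of_one_le_of_nonpos _ (by linarith)
  have : 0 ≤ ‖x‖ / R := by positivity
  linarith

lemma wt_scale (n : ℕ) (N R T : ℝ) (hN : 0 < N) (hR : 0 < R) (hT : 1 ≤ T) (x : Euc n) :
    wt n N (T * R) x ≤ ENNReal.ofReal (T ^ N) * wt n N R x := by
  unfold wt
  have hT0 : 0 < T := by linarith
  rw [← ENNReal.ofReal_mul (by positivity)]
  apply ENNReal.ofReal_le_ofReal
  have h1 : 0 ≤ ‖x‖ / R := by positivity
  have h2 : T⁻¹ * (1 + ‖x‖ / R) ≤ 1 + ‖x‖ / (T * R) := by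
    have : ‖x‖ / (T * R) = T⁻¹ * (‖x‖ / R) := by field_simp
    rw [this, mul_add]
    have : T⁻¹ ≤ 1 := inv_le_one_of_one_le₀ hT
    linarith
  calc (1 + ‖x‖ / (T * R)) ^ (-N) ≤ (T⁻¹ * (1 + ‖x‖ / R)) ^ (-N) :=
        Real.rpow_le_rpow_of_nonpos (by positivity) h2 (by linarith)
    _ = T ^ N * (1 + ‖x‖ / R) ^ (-N) := by
        rw [Real.mul_rpow (by positivity) (by positivity), Real.inv_rpow hT0.le, Real.rpow_neg hT0.le,
          inv_inv]

lemma wt_dyadic (n : ℕ) (N R : ℝ) (hN : 0 < N) (hR : 0 < R) (x : Euc n) :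
    wt n N R x ≤ ∑' k : ℕ, ENNReal.ofReal ((2:ℝ) ^ N * ((2:ℝ) ^ (-N)) ^ k) *
      (ball (0 : Euc n) (2 ^ k * R)).indicator (fun _ => 1) x := by
  have hex : ∃ k : ℕ, ‖x‖ < 2 ^ k * R := by
    obtain ⟨k, hk⟩ := pow_unbounded_of_one_lt (‖x‖ / R) (one_lt_two)
    exact ⟨k, (div_lt_iff₀ hR).1 hk⟩
  classical
  let k := Nat.find hex
  have hk : ‖x‖ < 2 ^ k * R := Nat.find_spec hex
  refine le_trans ?_ (ENNReal.le_tsum k)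
  have hmem : x ∈ ball (0 : Euc n) (2 ^ k * R) := by simpa using hk
  rw [Set.indicator_of_mem hmem, mul_one]
  rcases Nat.eq_zero_or_pos k with h0 | hpos
  · rw [h0]
    refine (wt_le_one n N R hN hR x).trans ?_
    rw [pow_zero, mul_one, ← ENNReal.ofReal_one]
    exact ENNReal.ofReal_le_ofReal (Real.one_le_rpow (by norm_num) hN.le)
  · obtain ⟨j, hj⟩ : ∃ j, k = j + 1 := ⟨k - 1, by omega⟩
    have hnot : ¬ ‖x‖ < 2 ^ j * R := Nat.find_min hex (show j < k by omega)
    rw [hj]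
    unfold wt
    apply ENNReal.ofReal_le_ofReal
    have h1 : (2:ℝ) ^ j ≤ ‖x‖ / R := by
      rw [le_div_iff₀ hR]; exact not_lt.1 hnot
    calc (1 + ‖x‖ / R) ^ (-N) ≤ ((2:ℝ) ^ j) ^ (-N) :=
          Real.rpow_le_rpow_of_nonpos (by positivity) (by linarith) (by linarith)
      _ = ((2:ℝ) ^ (-N)) ^ j := by
          rw [← Real.rpow_natCast, ← Real.rpow_natCast, ← Real.rpow_mul (by norm_num),
            ← Real.rpow_mul (by norm_num), mul_comm]
      _ = _ := by
          rw [pow_succ, mul_comm (_ ^ j), ← mul_assoc, ← Real.rpow_add (by norm_num)]; simp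

lemma wt_int (n : ℕ) (N R : ℝ) (hN : (n : ℝ) < N) (hR : 0 < R) :
    ∫⁻ x, wt n N R x ≤ ENNReal.ofReal (R ^ (n : ℝ)) *
      ENNReal.ofReal (∫ x : Euc n, (1 + ‖x‖) ^ (-N)) := by
  have hi : Integrable (fun x : Euc n => (1 + ‖x‖) ^ (-N)) :=
    integrable_one_add_norm (by simpa using hN)
  have hc := hi.comp_smul (R := R⁻¹) (by positivity)
  have h2 := Measure.integral_comp_inv_smul (volume : Measure (Euc n)) (fun x : Euc n => (1 + ‖x‖) ^ (-N)) R
  have he : ∀ x : Euc n, (1 + ‖R⁻¹ • x‖) = 1 + ‖x‖ / R := by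
    intro x; rw [norm_smul, norm_inv, Real.norm_of_nonneg hR.le]; ring
  simp only [he] at h2 hc
  unfold wt
  rw [← ofReal_integral_eq_lintegral_ofReal hc (ae_of_all _ fun x => by positivity), h2,
    ← ENNReal.ofReal_mul (by positivity)]
  apply ENNReal.ofReal_le_ofReal
  simp [abs_of_pos hR]

lemma holder_wt {α : Type*} [MeasurableSpace α] (μ : Measure α) (q p : ℝ) (hqp : q.HolderConjugate p)
    (U w : α → ℝ≥0∞) (hU : Measurable U) (hw : Measurable w) :
    ∫⁻ x, U x * w x ∂μ ≤ (∫⁻ x, U x ^ q * w x ∂μ) ^ (1 / q) * (∫⁻ x, w x ∂μ) ^ (1 / p) := by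
  have hq : 0 < q := hqp.pos
  have hp : 0 < p := hqp.symm.pos
  have h := ENNReal.lintegral_mul_le_Lp_mul_Lq μ hqp (f := fun x => U x * w x ^ (1 / q))
    (g := fun x => w x ^ (1 / p)) (by fun_prop) (by fun_prop)
  convert h using 3 with x x x
  · simp only [Pi.mul_apply]
    rw [mul_assoc, ← ENNReal.rpow_add_of_nonneg _ _ (by positivity) (by positivity)]
    have : 1 / q + 1 / p = 1 := by
      have := hqp.inv_add_inv_eq_one; simpa using this
    rw [this, ENNReal.rpow_one]
  · congr 1; ext x
    rw [ENNReal.mul_rpow_of_nonneg _ _ hq.le, ← ENNReal.rpow_mul, one_div, inv_mul_cancel₀ hq.ne',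
      ENNReal.rpow_one]
  · congr 1; ext x
    rw [← ENNReal.rpow_mul, one_div, inv_mul_cancel₀ hp.ne', ENNReal.rpow_one]

lemma self_bound (W c : ℝ≥0∞) (hW : W ≠ ⊤) (q p : ℝ) (hqp : q.HolderConjugate p)
    (h : W ≤ c * W ^ (1 / q)) : W ≤ c ^ p := by
  have hq : 0 < q := hqp.pos
  have hp : 0 < p := hqp.symm.pos
  by_cases h0 : W = 0
  · simp [h0]
  have e : W ^ (1 / p) * W ^ (1 / q) = W := by
    rw [← ENNReal.rpow_add _ _ h0 hW]
    have : 1 / p + 1 / q = 1 := by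
      have := hqp.symm.inv_add_inv_eq_one; simpa using this
    rw [this, ENNReal.rpow_one]
  have h2 : W ^ (1 / p) ≤ c := by
    have hne0 : W ^ (1 / q) ≠ 0 := by simp [ENNReal.rpow_eq_zero_iff, h0, hW]
    have hnet : W ^ (1 / q) ≠ ⊤ := ENNReal.rpow_ne_top_of_nonneg (by positivity) hW
    rw [← ENNReal.mul_le_mul_iff_left hne0 hnet, e]
    exact h
  calc W = (W ^ (1 / p)) ^ p := by
        rw [← ENNReal.rpow_mul, one_div, inv_mul_cancel₀ hp.ne', ENNReal.rpow_one]
    _ ≤ c ^ p := ENNReal.rpow_le_rpow h2 hp.le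

lemma core_W (n : ℕ) (s : ℝ) (hs : 0 < s) (q : ℝ)
    (U : Euc n → ℝ≥0∞) (hU : Measurable U) (A : ℝ≥0∞)
    (hI : ∀ R : ℝ, 1 ≤ R → ∫⁻ x in ball (0 : Euc n) R, U x ^ q ≤
      A * ENNReal.ofReal (R ^ (-(2 * s))) * ∫⁻ x, U x * wt n (n + 2 * s) R x) :
    ∀ R : ℝ, 1 ≤ R → ∫⁻ x, U x ^ q * wt n (n + 2 * s) R x ≤
      (A * (ENNReal.ofReal ((2:ℝ) ^ ((n:ℝ) + 2 * s) * (1 - (2:ℝ) ^ (-(2 * s)))⁻¹))) *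
        ENNReal.ofReal (R ^ (-(2 * s))) * ∫⁻ x, U x * wt n (n + 2 * s) R x := by
  intro R hR
  have hR0 : 0 < R := by linarith
  set N : ℝ := n + 2 * s with hN
  have hNpos : 0 < N := by positivity
  set g := ∫⁻ x, U x * wt n N R x with hg
  have hr0 : (0:ℝ) < (2:ℝ) ^ (-(2 * s)) := by positivity
  have hr1 : (2:ℝ) ^ (-(2 * s)) < 1 :=
    Real.rpow_lt_one_of_one_lt_of_neg (by norm_num) (by linarith)
  calc ∫⁻ x, U x ^ q * wt n N R x
      ≤ ∫⁻ x, ∑' k : ℕ, U x ^ q * (ENNReal.ofReal ((2:ℝ) ^ N * ((2:ℝ) ^ (-N)) ^ k) *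
      (ball (0 : Euc n) (2 ^ k * R)).indicator (fun _ => 1) x) := by
        apply lintegral_mono
        intro x
        simp only
        rw [ENNReal.tsum_mul_left]
        gcongr
        exact wt_dyadic n N R hNpos hR0 x
    _ = ∑' k : ℕ, ∫⁻ x, U x ^ q * (ENNReal.ofReal ((2:ℝ) ^ N * ((2:ℝ) ^ (-N)) ^ k) *
      (ball (0 : Euc n) (2 ^ k * R)).indicator (fun _ => 1) x) := by
        apply lintegral_tsum
        intro k
        have : Measurable ((ball (0 : Euc n) (2 ^ k * R)).indicator (fun _ => (1:ℝ≥0∞))) :=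
          measurable_const.indicator measurableSet_ball
        fun_prop
    _ = ∑' k : ℕ, ENNReal.ofReal ((2:ℝ) ^ N * ((2:ℝ) ^ (-N)) ^ k) *
          ∫⁻ x in ball (0 : Euc n) (2 ^ k * R), U x ^ q := by
        congr 1; ext k
        rw [← lintegral_indicator measurableSet_ball, ← lintegral_const_mul]
        · congr 1; ext x
          by_cases hx : x ∈ ball (0 : Euc n) (2 ^ k * R)
          · simp only [Set.indicator_of_mem hx]; ring
          · simp only [Set.indicator_of_notMem hx]; ring
        · exact (hU.pow_const q).indicator measurableSet_ball
    _ ≤ ∑' k : ℕ, ENNReal.ofReal ((2:ℝ) ^ N * ((2:ℝ) ^ (-N)) ^ k) *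
          (A * ENNReal.ofReal ((2 ^ k * R) ^ (-(2 * s))) *
            (ENNReal.ofReal (((2:ℝ) ^ k) ^ N) * g)) := by
        apply ENNReal.tsum_le_tsum
        intro k
        have h2k : (1:ℝ) ≤ 2 ^ k := one_le_pow₀ (by norm_num)
        refine mul_le_mul_right ((hI (2 ^ k * R) (by nlinarith)).trans ?_) _
        refine mul_le_mul_right ?_ _
        rw [hg, ← lintegral_const_mul _
          (show Measurable (fun x => U x * wt n N R x) from hU.mul (wt_meas n N R))]
        apply lintegral_mono
        intro x
        simp only
        calc U x * wt n N (2 ^ k * R) x ≤ U x * (ENNReal.ofReal (((2:ℝ) ^ k) ^ N) * wt n N R x) :=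
              mul_le_mul_right (wt_scale n N R _ hNpos hR0 h2k x) _
          _ = _ := by ring
    _ = ∑' k : ℕ, ENNReal.ofReal ((2:ℝ) ^ N * ((2:ℝ) ^ (-(2 * s))) ^ k) *
          (A * ENNReal.ofReal (R ^ (-(2 * s))) * g) := by
        congr 1; ext k
        have : ENNReal.ofReal ((2:ℝ) ^ N * ((2:ℝ) ^ (-N)) ^ k) *
            ENNReal.ofReal ((2 ^ k * R) ^ (-(2 * s))) * ENNReal.ofReal (((2:ℝ) ^ k) ^ N) =
            ENNReal.ofReal ((2:ℝ) ^ N * ((2:ℝ) ^ (-(2 * s))) ^ k) *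
              ENNReal.ofReal (R ^ (-(2 * s))) := by
          rw [← ENNReal.ofReal_mul (by positivity), ← ENNReal.ofReal_mul (by positivity),
            ← ENNReal.ofReal_mul (by positivity)]
          congr 1
          rw [Real.mul_rpow (by positivity) (by positivity)]
          have e1 : ∀ a : ℝ, ((2:ℝ) ^ k) ^ a = ((2:ℝ) ^ a) ^ k := fun a => by
            rw [← Real.rpow_natCast, ← Real.rpow_natCast, ← Real.rpow_mul (by norm_num),
              ← Real.rpow_mul (by norm_num), mul_comm]
          rw [e1, e1]
          have e2 : ((2:ℝ) ^ (-N)) ^ k * ((2:ℝ) ^ N) ^ k = 1 := by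
            rw [← mul_pow, ← Real.rpow_add (by norm_num)]; simp
          linear_combination ((2:ℝ) ^ N * ((2:ℝ) ^ (-(2 * s))) ^ k * R ^ (-(2 * s))) * e2
        calc _ = (ENNReal.ofReal ((2:ℝ) ^ N * ((2:ℝ) ^ (-N)) ^ k) *
            ENNReal.ofReal ((2 ^ k * R) ^ (-(2 * s))) * ENNReal.ofReal (((2:ℝ) ^ k) ^ N)) * (A * g) := by
              ring
          _ = _ := by rw [this]; ring
    _ = _ := by
        rw [ENNReal.tsum_mul_right, ← ENNReal.ofReal_tsum_of_nonneg (fun k => by positivity)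
          ((summable_geometric_of_lt_one hr0.le hr1).mul_left _), tsum_mul_left,
          tsum_geometric_of_lt_one hr0.le hr1]
        ring

lemma gbound (n : ℕ) (s : ℝ) (hs : 0 < s) (q p : ℝ) (hqp : q.HolderConjugate p)
    (hcrit : (n : ℝ) * (1 / p) ≤ 2 * s)
    (U : Euc n → ℝ≥0∞) (hU : Measurable U) (R : ℝ) (hR : 1 ≤ R) (S : Set (Euc n)) :
    ENNReal.ofReal (R ^ (-(2 * s))) * ∫⁻ x in S, U x * wt n (n + 2 * s) R x ≤
      (ENNReal.ofReal (∫ x : Euc n, (1 + ‖x‖) ^ (-((n:ℝ) + 2 * s)))) ^ (1 / p) *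
      (∫⁻ x in S, U x ^ q * wt n (n + 2 * s) R x) ^ (1 / q) := by
  have hp : 0 < p := hqp.symm.pos
  have hR0 : 0 < R := by linarith
  set D := ENNReal.ofReal (∫ x : Euc n, (1 + ‖x‖) ^ (-((n:ℝ) + 2 * s)))
  set X := (∫⁻ x in S, U x ^ q * wt n (n + 2 * s) R x) ^ (1 / q)
  have h1 := holder_wt (volume.restrict S) q p hqp U (wt n (n + 2 * s) R) hU (wt_meas _ _ _)
  have h2 : ∫⁻ x in S, wt n (n + 2 * s) R x ≤ ENNReal.ofReal (R ^ (n : ℝ)) * D :=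
    (setLIntegral_le_lintegral _ _).trans (wt_int n _ R (by linarith) hR0)
  have h3 := ENNReal.rpow_le_rpow h2 (show 0 ≤ 1 / p by positivity)
  rw [ENNReal.mul_rpow_of_nonneg _ _ (by positivity), ENNReal.ofReal_rpow_of_pos (by positivity),
    ← Real.rpow_mul hR0.le] at h3
  have h4 : ENNReal.ofReal (R ^ (-(2 * s))) * ENNReal.ofReal (R ^ ((n:ℝ) * (1 / p))) ≤ 1 := by
    rw [← ENNReal.ofReal_mul (by positivity), ← ENNReal.ofReal_one, ← Real.rpow_add hR0]
    exact ENNReal.ofReal_le_ofReal (Real.rpow_le_one_of_one_le_of_nonpos hR (by linarith))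
  calc _ ≤ ENNReal.ofReal (R ^ (-(2 * s))) * (X * (ENNReal.ofReal (R ^ ((n:ℝ) * (1 / p))) * D ^ (1 / p))) :=
        mul_le_mul_right (h1.trans (mul_le_mul_right h3 _)) _
    _ = (ENNReal.ofReal (R ^ (-(2 * s))) * ENNReal.ofReal (R ^ ((n:ℝ) * (1 / p)))) * (D ^ (1 / p) * X) := by
        ring
    _ ≤ 1 * (D ^ (1 / p) * X) := mul_le_mul_left h4 _
    _ = _ := one_mul _

open Filter Topology in
lemma core (n : ℕ) (s : ℝ) (hs : 0 < s) (q p : ℝ) (hqp : q.HolderConjugate p)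
    (hcrit : (n : ℝ) * (1 / p) ≤ 2 * s)
    (U : Euc n → ℝ≥0∞) (hU : Measurable U) (A : ℝ≥0∞) (hA : A ≠ ⊤)
    (hfin : ∀ R : ℝ, 1 ≤ R → ∫⁻ x, U x * wt n (n + 2 * s) R x ≠ ⊤)
    (hloc : ∀ R : ℝ, ∫⁻ x in ball (0 : Euc n) R, U x ≠ ⊤)
    (hI : ∀ R : ℝ, 1 ≤ R → ∫⁻ x in ball (0 : Euc n) R, U x ^ q ≤
      A * ENNReal.ofReal (R ^ (-(2 * s))) * ∫⁻ x, U x * wt n (n + 2 * s) R x) :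
    ∫⁻ x, U x ^ q = 0 := by
  have hp : 0 < p := hqp.symm.pos
  have hq : 0 < q := hqp.pos
  have hN : (0:ℝ) < n + 2 * s := by positivity
  have hW := core_W n s hs q U hU A hI
  set B := A * (ENNReal.ofReal ((2:ℝ) ^ ((n:ℝ) + 2 * s) * (1 - (2:ℝ) ^ (-(2 * s)))⁻¹))
  have hB : B ≠ ⊤ := ENNReal.mul_ne_top hA ENNReal.ofReal_ne_top
  clear_value B
  have hG := gbound n s hs q p hqp hcrit U hU
  set D := (ENNReal.ofReal (∫ x : Euc n, (1 + ‖x‖) ^ (-((n:ℝ) + 2 * s)))) ^ (1 / p)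
  have hD : D ≠ ⊤ := ENNReal.rpow_ne_top_of_nonneg (by positivity) ENNReal.ofReal_ne_top
  have hGu : ∀ R : ℝ, 1 ≤ R → ENNReal.ofReal (R ^ (-(2 * s))) * ∫⁻ x, U x * wt n (n + 2 * s) R x ≤
      D * (∫⁻ x, U x ^ q * wt n (n + 2 * s) R x) ^ (1 / q) := by
    intro R hR
    have := hG R hR Set.univ
    simpa using this
  have hWb : ∀ R : ℝ, 1 ≤ R → ∫⁻ x, U x ^ q * wt n (n + 2 * s) R x ≤ (B * D) ^ p := by
    intro R hR
    apply self_bound _ _ _ q p hqp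
    · refine (hW R hR).trans ?_
      rw [mul_assoc, mul_assoc B D]
      exact mul_le_mul_right (hGu R hR) _
    · exact ne_top_of_le_ne_top (ENNReal.mul_ne_top (ENNReal.mul_ne_top hB ENNReal.ofReal_ne_top)
        (hfin R hR)) (hW R hR)
  have hIb : ∀ R : ℝ, 1 ≤ R → ∫⁻ x in ball (0 : Euc n) R, U x ^ q ≤
      A * (D * ((B * D) ^ p) ^ (1 / q)) := by
    intro R hR
    refine (hI R hR).trans ?_
    rw [mul_assoc]
    refine mul_le_mul_right ((hGu R hR).trans ?_) _
    exact mul_le_mul_right (ENNReal.rpow_le_rpow (hWb R hR) (by positivity)) _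
  have hcov : AECover (volume : Measure (Euc n)) atTop (fun R : ℝ => ball (0 : Euc n) R) :=
    aecover_ball tendsto_id
  have hlim : Tendsto (fun R : ℝ => ∫⁻ x in ball (0 : Euc n) R, U x ^ q) atTop
      (𝓝 (∫⁻ x, U x ^ q)) :=
    hcov.lintegral_tendsto_of_countably_generated (hU.pow_const q).aemeasurable
  set T := ∫⁻ x, U x ^ q with hT
  have hTfin : T ≠ ⊤ := by
    have : T ≤ A * (D * ((B * D) ^ p) ^ (1 / q)) :=
      le_of_tendsto hlim ((eventually_ge_atTop 1).mono hIb)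
    refine ne_top_of_le_ne_top ?_ this
    refine ENNReal.mul_ne_top hA (ENNReal.mul_ne_top hD ?_)
    exact ENNReal.rpow_ne_top_of_nonneg (by positivity)
      (ENNReal.rpow_ne_top_of_nonneg hp.le (ENNReal.mul_ne_top hB hD))
  -- tail
  have hrlim : Tendsto (fun R : ℝ => ENNReal.ofReal (R ^ (-(2 * s)))) atTop (𝓝 0) := by
    rw [← ENNReal.ofReal_zero]
    exact ENNReal.tendsto_ofReal (tendsto_rpow_neg_atTop (by linarith))
  have hkey : ∀ ρ : ℝ, T ≤ A * (D * (∫⁻ x in (ball (0 : Euc n) ρ)ᶜ, U x ^ q) ^ (1 / q)) := by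
    intro ρ
    set Y := D * (∫⁻ x in (ball (0 : Euc n) ρ)ᶜ, U x ^ q) ^ (1 / q)
    have h1 : Tendsto (fun R : ℝ => A * (ENNReal.ofReal (R ^ (-(2 * s))) *
        (∫⁻ x in ball (0 : Euc n) ρ, U x) + Y)) atTop (𝓝 (A * (0 * (∫⁻ x in ball (0 : Euc n) ρ, U x) + Y))) :=
      ENNReal.Tendsto.const_mul ((ENNReal.Tendsto.mul_const hrlim (Or.inr (hloc ρ))).add_const Y)
        (Or.inr hA)
    rw [zero_mul, zero_add] at h1
    refine le_of_tendsto_of_tendsto hlim h1 ((eventually_ge_atTop 1).mono ?_)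
    intro R hR
    have hwt := wt_le_one n (n + 2 * s) R hN (by linarith)
    refine (hI R hR).trans ?_
    rw [mul_assoc]
    refine mul_le_mul_right ?_ _
    rw [← lintegral_add_compl _ (measurableSet_ball (x := (0 : Euc n)) (ε := ρ)), mul_add]
    refine add_le_add ?_ ?_
    · refine mul_le_mul_right (lintegral_mono fun x => ?_) _
      exact mul_le_of_le_one_right' (hwt x)
    · refine (hG R hR _).trans ?_
      refine mul_le_mul_right (ENNReal.rpow_le_rpow (lintegral_mono fun x => ?_) (by positivity)) _
      exact mul_le_of_le_one_right' (hwt x)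
  have htail : Tendsto (fun ρ : ℝ => ∫⁻ x in (ball (0 : Euc n) ρ)ᶜ, U x ^ q) atTop (𝓝 0) := by
    have h1 := ENNReal.Tendsto.sub (tendsto_const_nhds (x := T) (f := (atTop : Filter ℝ))) hlim (Or.inl hTfin)
    rw [tsub_self] at h1
    refine h1.congr fun ρ => ?_
    have h2 := lintegral_add_compl (μ := volume) (fun x => U x ^ q) (measurableSet_ball (x := (0 : Euc n)) (ε := ρ))
    have h3 : ∫⁻ x in ball (0 : Euc n) ρ, U x ^ q ≠ ⊤ :=
      ne_top_of_le_ne_top hTfin (setLIntegral_le_lintegral _ _)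
    rw [hT, ← h2, ENNReal.add_sub_cancel_left h3]
  have hfinal : Tendsto (fun ρ : ℝ => A * (D * (∫⁻ x in (ball (0 : Euc n) ρ)ᶜ, U x ^ q) ^ (1 / q))) atTop
      (𝓝 (A * (D * (0:ℝ≥0∞) ^ (1 / q)))) :=
    ENNReal.Tendsto.const_mul (ENNReal.Tendsto.const_mul (htail.ennrpow_const _) (Or.inr hD)) (Or.inr hA)
  rw [ENNReal.zero_rpow_of_pos (by positivity), mul_zero, mul_zero] at hfinal
  exact le_antisymm (ge_of_tendsto' hfinal hkey) bot_le

/-- Liouville under an abstract cutoff estimate; Proposition 1.2: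
if for each `R > 0` there is a measurable `ψ_R` satisfying the cutoff bounds and the tested
supersolution inequality `∫ u ψ_R ≥ ∫ u^q η_R²`, then `u = 0` a.e. -/
theorem liouville_abstract_cutoff
    (n : ℕ) (hn : 1 ≤ n) (s : ℝ) (hs : s ∈ Set.Ioo (0 : ℝ) 1)
    (q : ℝ) (hq1 : 1 < q)
    (hq2 : 2 * s < (n : ℝ) → q ≤ (n : ℝ) / ((n : ℝ) - 2 * s))
    (η : Euc n → ℝ) (hη : IsCutoff n η)
    (u : Euc n → ℝ) (humeas : Measurable u) (hupos : ∀ x, 0 ≤ u x)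
    (huloc : MemLqLoc n q u) (hutail : MemL1Tail n s u)
    (C : ℝ) (hC : 0 < C) (ψ : ℝ → Euc n → ℝ)
    (hψmeas : ∀ R : ℝ, 0 < R → Measurable (ψ R))
    (hψbound : ∀ R : ℝ, 0 < R → ∀ x : Euc n,
      (‖x‖ < 2 * R → |ψ R x| ≤ C * R ^ (-(2 * s))) ∧
      (2 * R ≤ ‖x‖ → |ψ R x| ≤ C * R ^ (n : ℝ) * ‖x‖ ^ (-(n : ℝ) - 2 * s)))
    (hψtest : ∀ R : ℝ, 0 < R →
      (∫ x : Euc n, u x ^ q * cutoffSq n η R x) ≤ ∫ x : Euc n, u x * ψ R x) :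
    ∀ᵐ x : Euc n, u x = 0 := by 
  obtain ⟨hs0, hs1⟩ := hs
  have hN : (0:ℝ) < n + 2 * s := by positivity
  have hq0 : 0 < q := by linarith
  obtain ⟨p, hqp⟩ : ∃ p : ℝ, q.HolderConjugate p := ⟨_, Real.HolderConjugate.conjExponent hq1⟩
  have hp0 : 0 < p := hqp.symm.pos
  have hpq1 : 1 / p = 1 - 1 / q := by
    have := hqp.inv_add_inv_eq_one
    simp only [one_div]; linarith
  have hcrit : (n : ℝ) * (1 / p) ≤ 2 * s := by
    have hn0 : (0:ℝ) < n := by exact_mod_cast hn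
    rw [hpq1]
    rcases lt_or_ge (2 * s) (n : ℝ) with h | h
    · have h1 := hq2 h
      rw [le_div_iff₀ (by linarith)] at h1
      have h2 : (n:ℝ) - 2 * s ≤ n / q := by rw [le_div_iff₀ hq0]; linarith
      have h3 : (n:ℝ) * (1 - 1 / q) = n - n / q := by ring
      linarith
    · have : 0 < 1 / q := by positivity
      nlinarith
  -- integrability of `u` against the weights
  have hint : ∀ R : ℝ, 1 ≤ R →
      Integrable (fun x : Euc n => u x * (1 + ‖x‖ / R) ^ (-((n:ℝ) + 2 * s))) := by
    intro R hR
    have hR0 : 0 < R := by linarith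
    refine (hutail.2.const_mul (R ^ ((n:ℝ) + 2 * s))).mono' (by fun_prop) (ae_of_all _ fun x => ?_)
    have h1 : (1 + ‖x‖) / R ≤ 1 + ‖x‖ / R := by
      rw [add_div]
      have : 1 / R ≤ 1 := by rw [div_le_one hR0]; exact hR
      linarith
    rw [Real.norm_of_nonneg (mul_nonneg (hupos x) (by positivity)), abs_of_nonneg (hupos x)]
    calc u x * (1 + ‖x‖ / R) ^ (-((n:ℝ) + 2 * s))
        ≤ u x * ((1 + ‖x‖) / R) ^ (-((n:ℝ) + 2 * s)) :=
          mul_le_mul_of_nonneg_left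
            (Real.rpow_le_rpow_of_nonpos (by positivity) h1 (by linarith)) (hupos x)
      _ = R ^ ((n:ℝ) + 2 * s) * (u x * (1 + ‖x‖) ^ (-(n:ℝ) - 2 * s)) := by
          rw [Real.div_rpow (by positivity) hR0.le, Real.rpow_neg hR0.le, div_inv_eq_mul,
            show -((n:ℝ) + 2 * s) = -(n:ℝ) - 2 * s by ring]
          ring
  have hlint : ∀ R : ℝ, 1 ≤ R → ∫⁻ x, ENNReal.ofReal (u x) * wt n (n + 2 * s) R x =
      ENNReal.ofReal (∫ x : Euc n, u x * (1 + ‖x‖ / R) ^ (-((n:ℝ) + 2 * s))) := by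
    intro R hR
    have hR0 : 0 < R := by linarith
    rw [ofReal_integral_eq_lintegral_ofReal (hint R hR)
      (ae_of_all _ fun x => mul_nonneg (hupos x) (by positivity))]
    congr 1; ext x
    rw [ENNReal.ofReal_mul (hupos x), wt]
  have key := core n s hs0 q p hqp hcrit (fun x => ENNReal.ofReal (u x)) (by fun_prop)
    (ENNReal.ofReal (C * 3 ^ ((n:ℝ) + 2 * s))) ENNReal.ofReal_ne_top
    (fun R hR => by rw [hlint R hR]; exact ENNReal.ofReal_ne_top)
    (fun R => by
      have h1 : IntegrableOn u (ball (0 : Euc n) R) :=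
        (hutail.1.integrableOn_isCompact (isCompact_closedBall 0 R)).mono_set ball_subset_closedBall
      exact h1.lintegral_lt_top.ne)
    (fun R hR => by
      have hR0 : 0 < R := by linarith
      rw [hlint R hR, ← ENNReal.ofReal_mul (by positivity), ← ENNReal.ofReal_mul (by positivity)]
      have hηc : Continuous η := hη.1.continuous
      have hcm : Measurable (cutoffSq n η R) := by
        unfold cutoffSq
        exact (Continuous.measurable (by fun_prop))
      have hcint : Integrable (fun x : Euc n => u x ^ q * cutoffSq n η R x) := by
        have h1 := (integrable_indicator_iff measurableSet_ball).2 (huloc (2 * R) (by positivity))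
        refine h1.mono' (by fun_prop) (ae_of_all _ fun x => ?_)
        have hux : 0 ≤ u x ^ q := Real.rpow_nonneg (hupos x) q
        rw [Real.norm_of_nonneg (mul_nonneg hux (show 0 ≤ cutoffSq n η R x from sq_nonneg _))]
        by_cases hx : x ∈ ball (0 : Euc n) (2 * R)
        · rw [Set.indicator_of_mem hx]
          refine mul_le_of_le_one_right hux ?_
          have := hη.2.1 (R⁻¹ • x)
          exact pow_le_one₀ this.1 this.2
        · rw [Set.indicator_of_notMem hx]
          have h0 : η (R⁻¹ • x) = 0 := by
            apply hη.2.2.2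
            rw [norm_smul, norm_inv, Real.norm_of_nonneg hR0.le]
            have : 2 * R ≤ ‖x‖ := by simpa using hx
            rw [← div_eq_inv_mul, le_div_iff₀ hR0]; exact this
          simp [cutoffSq, h0]
      have hstep1 : ∫⁻ x in ball (0 : Euc n) R, ENNReal.ofReal (u x) ^ q ≤
          ENNReal.ofReal (∫ x : Euc n, u x ^ q * cutoffSq n η R x) := by
        rw [ofReal_integral_eq_lintegral_ofReal hcint
          (ae_of_all _ fun x => mul_nonneg (Real.rpow_nonneg (hupos x) q) (sq_nonneg _)),
          ← lintegral_indicator measurableSet_ball]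
        apply lintegral_mono
        intro x
        by_cases hx : x ∈ ball (0 : Euc n) R
        · simp only [Set.indicator_of_mem hx]
          have h1 : η (R⁻¹ • x) = 1 := by
            apply hη.2.2.1
            rw [norm_smul, norm_inv, Real.norm_of_nonneg hR0.le]
            have : ‖x‖ < R := by simpa using hx
            rw [← div_eq_inv_mul, div_le_one hR0]; exact this.le
          rw [cutoffSq, h1, one_pow, mul_one, ENNReal.ofReal_rpow_of_nonneg (hupos x) hq0.le]
        · simp [Set.indicator_of_notMem hx]
      refine hstep1.trans (ENNReal.ofReal_le_ofReal ((hψtest R hR0).trans ?_))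
      rw [← integral_const_mul]
      refine (Real.le_norm_self _).trans
        (norm_integral_le_of_norm_le ((hint R hR).const_mul _) (ae_of_all _ fun x => ?_))
      rw [norm_mul, Real.norm_of_nonneg (hupos x), Real.norm_eq_abs]
      have hψx : |ψ R x| ≤ C * 3 ^ ((n:ℝ) + 2 * s) * R ^ (-(2 * s)) *
          (1 + ‖x‖ / R) ^ (-((n:ℝ) + 2 * s)) := by
        have hmain : ∀ t : ℝ, 0 < t → 1 + ‖x‖ / R ≤ 3 * t →
            t ^ (-((n:ℝ) + 2 * s)) ≤ 3 ^ ((n:ℝ) + 2 * s) * (1 + ‖x‖ / R) ^ (-((n:ℝ) + 2 * s)) := by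
          intro t ht h
          have h1 := Real.rpow_le_rpow_of_nonpos (by positivity) h
            (show -((n:ℝ) + 2 * s) ≤ 0 by linarith)
          rw [Real.mul_rpow (by norm_num) ht.le] at h1
          calc t ^ (-((n:ℝ) + 2 * s)) = 3 ^ ((n:ℝ) + 2 * s) *
                (3 ^ (-((n:ℝ) + 2 * s)) * t ^ (-((n:ℝ) + 2 * s))) := by
                rw [← mul_assoc, ← Real.rpow_add (by norm_num)]; simp
            _ ≤ _ := mul_le_mul_of_nonneg_left h1 (by positivity)
        have hpull : ∀ t : ℝ, 0 < t → 1 + ‖x‖ / R ≤ 3 * t →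
            C * R ^ (-(2 * s)) * t ^ (-((n:ℝ) + 2 * s)) ≤ C * 3 ^ ((n:ℝ) + 2 * s) * R ^ (-(2 * s)) *
          (1 + ‖x‖ / R) ^ (-((n:ℝ) + 2 * s)) := by
          intro t ht h
          refine (mul_le_mul_of_nonneg_left (hmain t ht h) (by positivity)).trans_eq ?_
          ring
        rcases lt_or_ge ‖x‖ (2 * R) with h | h
        · refine ((hψbound R hR0 x).1 h).trans ?_
          have h1 := hpull 1 one_pos (by
            have : ‖x‖ / R < 2 := by rw [div_lt_iff₀ hR0]; exact h
            linarith)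
          rwa [Real.one_rpow, mul_one] at h1
        · refine ((hψbound R hR0 x).2 h).trans ?_
          have h2 : 2 ≤ ‖x‖ / R := by rw [le_div_iff₀ hR0]; exact h
          have h1 := hpull (‖x‖ / R) (by linarith) (by linarith)
          refine le_trans (le_of_eq ?_) h1
          rw [Real.div_rpow (norm_nonneg _) hR0.le, Real.rpow_neg hR0.le ((n:ℝ) + 2 * s), div_inv_eq_mul,
            show -((n:ℝ) + 2 * s) = -(n:ℝ) - 2 * s by ring]
          have h3 : R ^ (n:ℝ) = R ^ (-(2 * s)) * R ^ ((n:ℝ) + 2 * s) := by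
            rw [← Real.rpow_add hR0]; congr 1; ring
          rw [h3]; ring
      calc u x * |ψ R x| ≤ u x * _ := mul_le_mul_of_nonneg_left hψx (hupos x)
        _ = _ := by ring)
  rw [lintegral_eq_zero_iff (by fun_prop)] at key
  filter_upwards [key] with x hx
  have hx' : ENNReal.ofReal (u x) ^ q = 0 := hx
  rw [ENNReal.rpow_eq_zero_iff_of_pos hq0, ENNReal.ofReal_eq_zero] at hx'
  exact le_antisymm hx' (hupos x)
end
end

section
/- (Sharpness of the Serrin exponent) Let n ≥ 1, s ∈ (0,1) with n > 2s, let q > n/(n−2s), and let K(z) := |z|^{−n−2s} (an admissible kernel). Then there exists a constant c > 0 such that the function u(x) := c (1+|x|)^{−2s/(q−1)} is a positive weak supersolution of L_K u = u^q in ℝⁿ; that is, u > 0 everywhere, u ∈ L^q_loc(ℝⁿ) ∩ L¹_{2s}(ℝⁿ), and ∫_{ℝⁿ} u(x) L_K φ(x) dx ≥ ∫_{ℝⁿ} u(x)^q φ(x) dx for every φ ∈ C_c^∞(ℝⁿ) with φ ≥ 0. -/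
open MeasureTheory Metric

noncomputable section

lemma det_inv (n : ℕ) (R : ℝ) (w : Euc n) :
  |((R / dist w 0) ^ 2 • ((Submodule.span ℝ {w - 0})ᗮ.reflection : Euc n →L[ℝ] Euc n)).det| = (R/‖w‖)^(2*n) := by
  rw [ContinuousLinearMap.det]
  rw [ContinuousLinearMap.toLinearMap_smul, LinearMap.det_smul]
  have h := (Submodule.span ℝ {w - 0})ᗮ.det_reflection (𝕜 := ℝ)
  have h2 : LinearMap.det ((((Submodule.span ℝ {w - 0})ᗮ.reflection : Euc n →L[ℝ] Euc n)) : Euc n →ₗ[ℝ] Euc n) = (-1) ^ Module.finrank ℝ ((Submodule.span ℝ {w - 0})ᗮᗮ : Submodule ℝ (Euc n)) := h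
  rw [h2, abs_mul, abs_pow, abs_pow, abs_pow, abs_neg, abs_one, one_pow, mul_one, sq_abs, dist_zero_right]
  simp [pow_mul]

lemma K_meas (n : ℕ) (r : ℝ) : Measurable (fun z : Euc n => ‖z‖ ^ r) := by fun_prop

lemma K_tail (n : ℕ) (s : ℝ) (hs : 0 < s) (ε : ℝ) (hε : 0 < ε) :
    IntegrableOn (fun z : Euc n => ‖z‖ ^ (-(n : ℝ) - 2 * s)) {z | ε < ‖z‖} := by
  have h1 : Integrable (fun z : Euc n => (1 + ‖z‖) ^ (-((n:ℝ) + 2 * s))) volume :=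
    integrable_one_add_norm (by simp; linarith)
  have h2 := (h1.const_mul ((ε / (1 + ε)) ^ (-((n:ℝ) + 2 * s)))).integrableOn (s := {z | ε < ‖z‖})
  refine Integrable.mono' h2 (K_meas n _).aestronglyMeasurable ?_
  refine (ae_restrict_iff' (measurableSet_lt measurable_const measurable_norm)).2 (.of_forall ?_)
  intro z (hz : ε < ‖z‖)
  have hz0 : 0 < ‖z‖ := hε.trans hz
  rw [Real.norm_of_nonneg (by positivity), ← Real.mul_rpow (by positivity) (by positivity)]
  rw [show -(n:ℝ) - 2 * s = -((n:ℝ) + 2 * s) by ring]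
  refine Real.rpow_le_rpow_of_nonpos (by positivity) ?_ (by nlinarith [Nat.cast_nonneg (α := ℝ) n])
  rw [div_mul_eq_mul_div, div_le_iff₀ (by positivity)]
  nlinarith

lemma K_near (n : ℕ) (hn : 1 ≤ n) (s : ℝ) (hs : s < 1) :
    IntegrableOn (fun z : Euc n => ‖z‖ ^ 2 * ‖z‖ ^ (-(n : ℝ) - 2 * s)) (ball 0 2) := by
  have : Nonempty (Fin n) := ⟨⟨0, hn⟩⟩
  rw [integrableOn_fun_norm_addHaar volume (f := fun y => y ^ 2 * y ^ (-(n : ℝ) - 2 * s))]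
  have h : IntegrableOn (fun y : ℝ => y ^ (1 - 2 * s)) (Set.Ioo 0 2) := by
    have := (intervalIntegral.intervalIntegrable_rpow' (a := 0) (b := 2) (r := 1 - 2 * s) (by linarith))
    rw [intervalIntegrable_iff_integrableOn_Ioo_of_le (by norm_num)] at this
    exact this
  refine h.congr_fun ?_ measurableSet_Ioo
  intro y hy
  have hy0 : 0 < y := hy.1
  simp only [finrank_euclideanSpace, Fintype.card_fin, smul_eq_mul]
  rw [← Real.rpow_natCast, ← Real.rpow_natCast, ← Real.rpow_add hy0, ← Real.rpow_add hy0]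
  congr 1
  push_cast [Nat.cast_sub hn]
  ring

lemma D2_bound (n : ℕ) (φ : Euc n → ℝ) (h : IsTestFun n φ) :
    ∃ M : ℝ, 0 ≤ M ∧ ∀ x z, |2 * φ x - φ (x + z) - φ (x - z)| ≤ M * ‖z‖ ^ 2 := by
  obtain ⟨h1, h2⟩ := h
  have hd : ContDiff ℝ 1 (fderiv ℝ φ) := h1.fderiv_right (by norm_cast)
  obtain ⟨C, hC⟩ := hd.lipschitzWith_of_hasCompactSupport (h2.fderiv (𝕜 := ℝ)) (by simp)
  refine ⟨C, C.2, fun x z => ?_⟩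
  have hdiff : Differentiable ℝ φ := h1.differentiable (by simp)
  have key := (convex_univ (𝕜 := ℝ) (E := Euc n)).norm_image_sub_le_of_norm_fderiv_le (𝕜 := ℝ)
    (f := fun y => φ (y + z) - φ y) (C := C * ‖z‖) (x := x - z) (y := x)
    (fun y _ => by fun_prop) ?_ (Set.mem_univ _) (Set.mem_univ _)
  · simp only [sub_add_cancel, sub_sub_cancel] at key
    rw [Real.norm_eq_abs, abs_sub_comm] at key
    calc _ = _ := by congr 1; ring
      _ ≤ _ := key
      _ = _ := by ring
  · intro y _
    rw [fderiv_fun_sub (by fun_prop) (by fun_prop), fderiv_comp_add_right]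
    simpa [dist_eq_norm] using hC.dist_le_mul (y + z) y

def D2 (n : ℕ) (φ : Euc n → ℝ) (x z : Euc n) : ℝ := 2 * φ x - φ (x + z) - φ (x - z)

lemma D2_int (n : ℕ) (φ : Euc n → ℝ) (h : Integrable φ) (z : Euc n) :
    Integrable (fun x => D2 n φ x z) :=
  ((h.const_mul 2).sub (h.comp_add_right z)).sub (h.comp_sub_right z)

lemma joint_int (n : ℕ) (hn : 1 ≤ n) (s : ℝ) (hs0 : 0 < s) (hs : s < 1) (φ : Euc n → ℝ) (h : IsTestFun n φ) :
    Integrable (fun p : Euc n × Euc n => D2 n φ p.1 p.2 * ‖p.2‖ ^ (-(n : ℝ) - 2 * s))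
      (volume.prod volume) := by
  have hc : Continuous φ := h.1.continuous
  have hi : Integrable φ := hc.integrable_of_hasCompactSupport h.2
  obtain ⟨M, hM0, hM⟩ := D2_bound n φ h
  have hmeas : Measurable (fun p : Euc n × Euc n => D2 n φ p.1 p.2 * ‖p.2‖ ^ (-(n : ℝ) - 2 * s)) := by
    have : Measurable φ := hc.measurable
    unfold D2
    fun_prop
  rw [integrable_prod_iff' hmeas.aestronglyMeasurable]
  refine ⟨.of_forall fun z => (D2_int n φ hi z).mul_const (‖z‖ ^ (-(n : ℝ) - 2 * s)), ?_⟩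
  have hGm : AEStronglyMeasurable (fun z : Euc n => ∫ x : Euc n, ‖D2 n φ x z * ‖z‖ ^ (-(n : ℝ) - 2 * s)‖) volume :=
    (hmeas.norm.stronglyMeasurable.integral_prod_left' (μ := volume)).aestronglyMeasurable
  have hGe : ∀ z : Euc n, (∫ x : Euc n, ‖D2 n φ x z * ‖z‖ ^ (-(n : ℝ) - 2 * s)‖)
      = (∫ x, ‖D2 n φ x z‖) * ‖z‖ ^ (-(n : ℝ) - 2 * s) := by
    intro z
    rw [← integral_mul_const]
    congr 1; ext x
    rw [norm_mul, Real.norm_of_nonneg (by positivity : 0 ≤ ‖z‖ ^ (-(n : ℝ) - 2 * s))]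
  obtain ⟨ρ, hρ⟩ := h.2.isCompact.isBounded.subset_closedBall (0 : Euc n)
  have hz : ∀ x : Euc n, ρ < ‖x‖ → φ x = 0 := by
    intro x hx
    by_contra hne
    have := hρ (subset_tsupport _ (Function.mem_support.2 hne))
    simp at this
    linarith
  have hA : IntegrableOn (fun z : Euc n => ∫ x : Euc n, ‖D2 n φ x z * ‖z‖ ^ (-(n : ℝ) - 2 * s)‖) (ball 0 2) := by
    refine Integrable.mono' ((K_near n hn s hs).const_mul (M * volume.real (closedBall (0 : Euc n) (ρ + 2)))) hGm.restrict ?_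
    refine (ae_restrict_iff' measurableSet_ball).2 (.of_forall fun z hz2 => ?_)
    rw [hGe]
    have hz2' : ‖z‖ < 2 := by simpa using hz2
    rw [Real.norm_of_nonneg (by positivity)]
    have e1 : (∫ x, ‖D2 n φ x z‖) = ∫ x in closedBall (0 : Euc n) (ρ + 2), ‖D2 n φ x z‖ := by
      symm
      apply setIntegral_eq_integral_of_forall_compl_eq_zero
      intro x hx
      have hx' : ρ + 2 < ‖x‖ := by simpa using hx
      have a1 := norm_sub_le (x + z) z
      have a2 := norm_add_le (x - z) z
      simp only [add_sub_cancel_right, sub_add_cancel] at a1 a2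
      rw [D2, hz x (by linarith), hz (x + z) (by linarith), hz (x - z) (by linarith)]
      simp
    have e2 : (∫ x, ‖D2 n φ x z‖) ≤ M * ‖z‖ ^ 2 * volume.real (closedBall (0 : Euc n) (ρ + 2)) := by
      rw [e1]
      have := norm_setIntegral_le_of_norm_le_const (μ := volume) (s := closedBall (0 : Euc n) (ρ + 2))
        (f := fun x => ‖D2 n φ x z‖) (C := M * ‖z‖ ^ 2) measure_closedBall_lt_top
        (fun x _ => by simpa [D2] using hM x z)
      exact (le_abs_self _).trans this
    calc _ ≤ M * ‖z‖ ^ 2 * volume.real (closedBall (0 : Euc n) (ρ + 2)) * ‖z‖ ^ (-(n : ℝ) - 2 * s) := by gcongr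
      _ = _ := by ring
  have hB : IntegrableOn (fun z : Euc n => ∫ x : Euc n, ‖D2 n φ x z * ‖z‖ ^ (-(n : ℝ) - 2 * s)‖) {z | 1 < ‖z‖} := by
    refine Integrable.mono' ((K_tail n s hs0 1 one_pos).const_mul (4 * ∫ x, ‖φ x‖)) hGm.restrict ?_
    refine .of_forall fun z => ?_
    rw [hGe, Real.norm_of_nonneg (by positivity)]
    gcongr
    calc (∫ x, ‖D2 n φ x z‖) ≤ ∫ x, (2 * ‖φ x‖ + ‖φ (x + z)‖ + ‖φ (x - z)‖) := by
          refine integral_mono (D2_int n φ hi z).norm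
            (((hi.norm.const_mul 2).add (hi.norm.comp_add_right z)).add (hi.norm.comp_sub_right z)) ?_
          intro x
          simp only [D2, Real.norm_eq_abs]
          have := abs_sub (2 * φ x - φ (x + z)) (φ (x - z))
          have := abs_sub (2 * φ x) (φ (x + z))
          have : |2 * φ x| = 2 * |φ x| := by rw [abs_mul]; simp
          linarith
      _ = 4 * ∫ x, ‖φ x‖ := by
          have i1 : Integrable (fun x => 2 * ‖φ x‖ + ‖φ (x + z)‖) :=
            (hi.norm.const_mul 2).add (hi.norm.comp_add_right z)
          rw [integral_add i1 (hi.norm.comp_sub_right z),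
            integral_add (hi.norm.const_mul 2) (hi.norm.comp_add_right z), integral_const_mul,
            integral_add_right_eq_self (fun x => ‖φ x‖), integral_sub_right_eq_self (fun x => ‖φ x‖)]
          ring
  have := hA.union hB
  rw [← integrableOn_univ]
  refine this.mono_set ?_
  intro z _
  by_cases hz1 : ‖z‖ < 2
  · left; simpa using hz1
  · right; simp; linarith

def kap (n : ℕ) (s β : ℝ) : ℝ :=
  (2 ^ β - 1) * (2 ^ ((n:ℝ) - 2 * s - β) - 1) * (3 / 2) ^ (-(n:ℝ) - 2 * s) * (1 / 2) ^ n *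
    volume.real (ball (0 : Euc n) 1)

lemma kap_pos (n : ℕ) (s β : ℝ) (hβ : 0 < β) (hβ2 : β < n - 2 * s) : 0 < kap n s β := by
  have h1 : (1:ℝ) < 2 ^ β := Real.one_lt_rpow (by norm_num) hβ
  have h2 : (1:ℝ) < 2 ^ ((n:ℝ) - 2 * s - β) := Real.one_lt_rpow (by norm_num) (by linarith)
  have h3 : 0 < volume.real (ball (0 : Euc n) 1) :=
    ENNReal.toReal_pos (measure_ball_pos _ _ one_pos).ne' measure_ball_lt_top.ne
  have h4 : (0:ℝ) < 2 ^ β - 1 := by linarith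
  have h5 : (0:ℝ) < 2 ^ ((n:ℝ) - 2 * s - β) - 1 := by linarith
  unfold kap
  positivity

open EuclideanGeometry in
lemma core_s18 (n : ℕ) (hn : 1 ≤ n) (s β : ℝ) (hs : 0 < s) (hβ : 0 < β) (hβ2 : β < n - 2 * s)
    (a : Euc n) (R : ℝ) (hR : ‖a‖ = R) (hR1 : 1 ≤ R) (ε : ℝ) (hε2 : ε < 1 / 2)
    (f : Euc n → ℝ) (hfi : IntegrableOn f {w | ε < ‖w - a‖})
    (hf : ∀ w, w ≠ 0 → (R ^ (-β) - ‖w‖ ^ (-β)) * ‖w - a‖ ^ (-(n : ℝ) - 2 * s) ≤ f w) :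
    kap n s β * R ^ (-β - 2 * s) ≤ ∫ w in {w | ε < ‖w - a‖}, f w := by
  have hR0 : 0 < R := by linarith
  have ha0 : a ≠ 0 := by rintro rfl; simp at hR; linarith
  set A : Set (Euc n) := {w | ε < ‖w - a‖} with hA
  have hAm : MeasurableSet A := measurableSet_lt measurable_const (by fun_prop)
  set B : Set (Euc n) := ball 0 R with hB
  set ι : Euc n → Euc n := inversion 0 R with hι
  have hιa : ι a = a := inversion_of_mem_sphere (by simpa using hR)
  have hιn : ∀ w, ‖ι w‖ = R ^ 2 / ‖w‖ := by
    intro w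
    have := dist_inversion_center (0 : Euc n) w R
    simpa using this
  have hιd : ∀ w, w ≠ 0 → ‖ι w - a‖ = R / ‖w‖ * ‖w - a‖ := by
    intro w hw
    have := dist_inversion_inversion hw ha0 R
    rw [← hι, hιa] at this
    rw [← dist_eq_norm, this, dist_zero_right, dist_zero_right, hR, dist_eq_norm]
    field_simp
  set T : Set (Euc n) := {w | w ≠ 0 ∧ ‖w‖ ≤ R ∧ ε < R / ‖w‖ * ‖w - a‖} with hT
  have hTm : MeasurableSet T := by
    have m : Measurable (fun w : Euc n => R / ‖w‖ * ‖w - a‖) := by fun_prop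
    exact (measurableSet_singleton (0 : Euc n)).compl.inter
      ((measurableSet_le measurable_norm measurable_const).inter
        (measurableSet_lt measurable_const m))
  have hTi : ι '' T = A \ B := by
    ext w
    constructor
    · rintro ⟨v, ⟨hv0, hv1, hv2⟩, rfl⟩
      have hvp : 0 < ‖v‖ := norm_pos_iff.2 hv0
      refine ⟨?_, ?_⟩
      · show ε < ‖ι v - a‖
        rw [hιd v hv0]; exact hv2
      · simp only [hB, mem_ball, dist_zero_right, not_lt]
        rw [hιn, le_div_iff₀ hvp]
        nlinarith
    · rintro ⟨h1, h2⟩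
      have h2' : R ≤ ‖w‖ := by simpa [hB] using h2
      have hw0 : w ≠ 0 := by rintro rfl; simp at h2'; linarith
      have hwp : 0 < ‖w‖ := norm_pos_iff.2 hw0
      have hii : ι (ι w) = w := inversion_inversion 0 hR0.ne' w
      have hi0 : ι w ≠ 0 := by
        rw [← norm_pos_iff, hιn]; positivity
      refine ⟨ι w, ⟨hi0, ?_, ?_⟩, hii⟩
      · rw [hιn, div_le_iff₀ hwp]; nlinarith
      · rw [← hιd _ hi0, hii]; exact h1
  set F : Euc n → ℝ := fun w => (R / ‖w‖) ^ (2 * n) * f (ι w) with hF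
  have hder : ∀ w ∈ T, HasFDerivWithinAt ι
      ((R / dist w 0) ^ 2 • ((Submodule.span ℝ {w - 0})ᗮ.reflection : Euc n →L[ℝ] Euc n)) T w :=
    fun w hw => (hasFDerivAt_inversion hw.1).hasFDerivWithinAt
  have hinj : Set.InjOn ι T := (inversion_injective 0 hR0.ne').injOn
  have hcv : ∫ w in A \ B, f w = ∫ w in T, F w := by
    rw [← hTi, integral_image_eq_integral_abs_det_fderiv_smul volume hTm hder hinj]
    simp only [det_inv, hF, smul_eq_mul]
  have hFi : IntegrableOn F T := by
    have := (integrableOn_image_iff_integrableOn_abs_det_fderiv_smul volume hTm hder hinj f).1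
      (hTi ▸ hfi.mono_set Set.sdiff_subset)
    simpa only [det_inv, hF, smul_eq_mul] using this
  -- pointwise lower bounds
  have hτ : ∀ w : Euc n, w ≠ 0 → ‖w‖ ≤ R → 1 ≤ R / ‖w‖ := fun w hw0 hw => by
    rw [le_div_iff₀ (norm_pos_iff.2 hw0)]; linarith
  have hFlow : ∀ w : Euc n, w ≠ 0 → R ^ (-β) * ‖w - a‖ ^ (-(n : ℝ) - 2 * s) *
      ((1 - (R / ‖w‖) ^ (-β)) * (R / ‖w‖) ^ ((n:ℝ) - 2 * s)) ≤ F w := by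
    intro w hw0
    have hwp : 0 < ‖w‖ := norm_pos_iff.2 hw0
    have hi0 : ι w ≠ 0 := by
      rw [← norm_pos_iff, hιn]; positivity
    have h := hf (ι w) hi0
    rw [hιd w hw0, hιn] at h
    have hτp : 0 < R / ‖w‖ := by positivity
    have e : R ^ 2 / ‖w‖ = R * (R / ‖w‖) := by ring
    rw [e] at h
    simp only [hF]
    refine le_trans (le_of_eq ?_) (mul_le_mul_of_nonneg_left h (by positivity))
    generalize R / ‖w‖ = τ at hτp
    rw [Real.mul_rpow hR0.le hτp.le, Real.mul_rpow hτp.le (norm_nonneg _)]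
    have e2 : τ ^ ((n:ℝ) - 2 * s) = τ ^ (2 * n) * τ ^ (-(n:ℝ) - 2 * s) := by
      rw [← Real.rpow_natCast, ← Real.rpow_add hτp]
      congr 1; push_cast; ring
    rw [e2]; ring
  have hF0 : ∀ w ∈ T, 0 ≤ F w := by
    intro w hw
    refine le_trans ?_ (hFlow w hw.1)
    have h1 := hτ w hw.1 hw.2.1
    have : (R / ‖w‖) ^ (-β) ≤ 1 := Real.rpow_le_one_of_one_le_of_nonpos h1 (by linarith)
    have : 0 ≤ 1 - (R / ‖w‖) ^ (-β) := by linarith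
    positivity
  have hsum : ∀ w : Euc n, w ≠ 0 → R ^ (-β) * ‖w - a‖ ^ (-(n : ℝ) - 2 * s) *
      (((R / ‖w‖) ^ β - 1) * ((R / ‖w‖) ^ ((n:ℝ) - 2 * s - β) - 1)) ≤ f w + F w := by
    intro w hw0
    have hwp : 0 < ‖w‖ := norm_pos_iff.2 hw0
    have h1 := hf w hw0
    have h2 := hFlow w hw0
    refine le_trans (le_of_eq ?_) (add_le_add h1 h2)
    have hτp : 0 < R / ‖w‖ := by positivity
    have e1 : ‖w‖ ^ (-β) = R ^ (-β) * (R / ‖w‖) ^ β := by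
      rw [Real.rpow_neg hwp.le, Real.rpow_neg hR0.le, Real.div_rpow hR0.le hwp.le]
      field_simp
    rw [e1]
    generalize R / ‖w‖ = τ at hτp
    have e2 : τ ^ ((n:ℝ) - 2 * s) = τ ^ β * τ ^ ((n:ℝ) - 2 * s - β) := by
      rw [← Real.rpow_add hτp]; congr 1; ring
    have e3 : τ ^ (-β) * τ ^ β = 1 := by
      rw [← Real.rpow_add hτp]; simp
    rw [e2]
    linear_combination (R ^ (-β) * ‖w - a‖ ^ (-(n : ℝ) - 2 * s) * τ ^ ((n:ℝ) - 2 * s - β)) * e3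
  have hsum0 : ∀ w, w ≠ 0 → ‖w‖ ≤ R → 0 ≤ f w + F w := by
    intro w hw0 hw
    refine le_trans ?_ (hsum w hw0)
    have h1 := hτ w hw0 hw
    have := Real.one_le_rpow h1 hβ.le
    have := Real.one_le_rpow h1 (z := (n:ℝ) - 2 * s - β) (by linarith)
    have : 0 ≤ (R / ‖w‖) ^ β - 1 := by linarith
    have : 0 ≤ (R / ‖w‖) ^ ((n:ℝ) - 2 * s - β) - 1 := by linarith
    positivity
  set Q : Set (Euc n) := (A ∩ B) \ {0} with hQ
  have hQm : MeasurableSet Q := (hAm.inter measurableSet_ball).diff (measurableSet_singleton _)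
  have hQT : Q ⊆ T := by
    rintro w ⟨⟨h1, h2⟩, h3⟩
    have h2' : ‖w‖ < R := by simpa [hB] using h2
    refine ⟨h3, h2'.le, lt_of_lt_of_le h1 ?_⟩
    have := hτ w h3 h2'.le
    nlinarith [norm_nonneg (w - a)]
  have hQA : Q ⊆ A := fun w hw => hw.1.1
  set P : Set (Euc n) := ball 0 (R / 2) \ {0} with hP
  have hPm : MeasurableSet P := measurableSet_ball.diff (measurableSet_singleton _)
  have hPQ : P ⊆ Q := by
    rintro w ⟨h1, h3⟩
    have h1' : ‖w‖ < R / 2 := by simpa using h1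
    refine ⟨⟨?_, ?_⟩, h3⟩
    · show ε < ‖w - a‖
      have := norm_sub_norm_le a w
      rw [norm_sub_rev] at this
      linarith
    · simp [hB]; linarith
  have : Nonempty (Fin n) := ⟨⟨0, hn⟩⟩
  have e0 : ∫ w in A ∩ B, f w = ∫ w in Q, f w :=
    (setIntegral_congr_set (sdiff_null_ae_eq_self (by simp))).symm
  have hQi : IntegrableOn (fun w => f w + F w) Q := (hfi.mono_set hQA).add (hFi.mono_set hQT)
  have hPi := hQi.mono_set hPQ
  set c0 : ℝ := R ^ (-β) * (3 / 2 * R) ^ (-(n : ℝ) - 2 * s) * ((2 ^ β - 1) * (2 ^ ((n:ℝ) - 2 * s - β) - 1)) with hc0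
  have hPlow : ∀ w ∈ P, c0 ≤ f w + F w := by
    rintro w ⟨h1, h3⟩
    have h1' : ‖w‖ < R / 2 := by simpa using h1
    have h3' : w ≠ 0 := h3
    have hwp : 0 < ‖w‖ := norm_pos_iff.2 h3'
    refine le_trans ?_ (hsum w h3')
    have h2 : 2 ≤ R / ‖w‖ := by rw [le_div_iff₀ hwp]; linarith
    have g1 : (1:ℝ) < 2 ^ β := Real.one_lt_rpow (by norm_num) hβ
    have g2 : (1:ℝ) < 2 ^ ((n:ℝ) - 2 * s - β) := Real.one_lt_rpow (by norm_num) (by linarith)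
    have g1' : (0:ℝ) ≤ 2 ^ β - 1 := by linarith
    have g2' : (0:ℝ) ≤ 2 ^ ((n:ℝ) - 2 * s - β) - 1 := by linarith
    have k1 : (2:ℝ) ^ β ≤ (R / ‖w‖) ^ β := Real.rpow_le_rpow (by norm_num) h2 hβ.le
    have k2 : (2:ℝ) ^ ((n:ℝ) - 2 * s - β) ≤ (R / ‖w‖) ^ ((n:ℝ) - 2 * s - β) :=
      Real.rpow_le_rpow (by norm_num) h2 (by linarith)
    have hwa : 0 < ‖w - a‖ := by
      have := norm_sub_norm_le a w
      rw [norm_sub_rev] at this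
      linarith
    have k3 : (3 / 2 * R) ^ (-(n : ℝ) - 2 * s) ≤ ‖w - a‖ ^ (-(n : ℝ) - 2 * s) := by
      refine Real.rpow_le_rpow_of_nonpos hwa ?_ (by linarith [Nat.cast_nonneg (α := ℝ) n])
      have := norm_sub_le w a
      linarith
    have g3 : 0 ≤ (R / ‖w‖) ^ β - 1 := by linarith
    rw [hc0]
    gcongr
  have hvol : volume.real P = (R / 2) ^ n * volume.real (ball (0 : Euc n) 1) := by
    have : volume.real P = volume.real (ball (0 : Euc n) (R / 2)) := by
      rw [hP]
      exact measureReal_congr (sdiff_null_ae_eq_self (by simp))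
    rw [this, Measure.real, Measure.addHaar_ball _ _ (by positivity), ENNReal.toReal_mul,
      ENNReal.toReal_ofReal (by positivity)]
    simp [Measure.real]
  have hfin : c0 * volume.real P = kap n s β * R ^ (-β - 2 * s) := by
    rw [hvol, hc0, kap, Real.mul_rpow (by norm_num) hR0.le]
    have : R ^ (-β - 2 * s) = R ^ (-β) * R ^ (-(n:ℝ) - 2 * s) * R ^ n := by
      rw [← Real.rpow_natCast, ← Real.rpow_add hR0, ← Real.rpow_add hR0]; congr 1; ring
    rw [this, show R / 2 = R * (1 / 2) by ring, mul_pow]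
    ring
  have hPfin : volume P ≠ ⊤ := ((measure_mono Set.sdiff_subset).trans_lt measure_ball_lt_top).ne
  calc kap n s β * R ^ (-β - 2 * s) = ∫ w in P, c0 := by
        rw [setIntegral_const, ← hfin, smul_eq_mul, mul_comm]
    _ ≤ ∫ w in P, (f w + F w) :=
        setIntegral_mono_on (integrableOn_const hPfin) hPi hPm hPlow
    _ ≤ ∫ w in Q, (f w + F w) := by
        refine setIntegral_mono_set hQi ?_ hPQ.eventuallyLE
        refine (ae_restrict_iff' hQm).2 (.of_forall fun w hw => ?_)
        have := (hQT hw)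
        exact hsum0 w this.1 this.2.1
    _ = (∫ w in Q, f w) + ∫ w in Q, F w := integral_add (hfi.mono_set hQA) (hFi.mono_set hQT)
    _ ≤ (∫ w in Q, f w) + ∫ w in T, F w := by
        refine add_le_add le_rfl ?_
        refine setIntegral_mono_set hFi ?_ hQT.eventuallyLE
        exact (ae_restrict_iff' hTm).2 (.of_forall fun w hw => hF0 w hw)
    _ = (∫ w in A ∩ B, f w) + ∫ w in A \ B, f w := by rw [e0, hcv]
    _ = ∫ w in A, f w := integral_inter_add_sdiff measurableSet_ball hfi

def U (n : ℕ) (β : ℝ) (x : Euc n) : ℝ := (1 + ‖x‖) ^ (-β)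

lemma U_cont (n : ℕ) (β : ℝ) : Continuous (U n β) := by
  unfold U
  refine Continuous.rpow_const (by fun_prop) fun x => Or.inl ?_
  positivity

lemma U_pos (n : ℕ) (β : ℝ) (x : Euc n) : 0 < U n β x := by unfold U; positivity

lemma U_le (n : ℕ) (β : ℝ) (hβ : 0 < β) (x : Euc n) : U n β x ≤ 1 :=
  Real.rpow_le_one_of_one_le_of_nonpos (by linarith [norm_nonneg x]) (by linarith)

lemma U_int (n : ℕ) (s β : ℝ) (hs : 0 < s) (hβ : 0 < β) (x : Euc n) (ε : ℝ) (hε : 0 < ε) :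
    IntegrableOn (fun z => (U n β x - U n β (x + z)) * ‖z‖ ^ (-(n : ℝ) - 2 * s)) {z | ε < ‖z‖} := by
  refine Integrable.bdd_mul (c := 1) (K_tail n s hs ε hε) ?_ (.of_forall fun z => ?_)
  · have := U_cont n β
    exact Continuous.aestronglyMeasurable (by fun_prop)
  · have := U_le n β hβ x
    have := U_le n β hβ (x + z)
    have := U_pos n β x
    have := U_pos n β (x + z)
    rw [Real.norm_eq_abs, abs_le]
    constructor <;> linarith

lemma pointwise (n : ℕ) (hn : 1 ≤ n) (s β : ℝ) (hs : 0 < s) (hβ : 0 < β) (hβ2 : β < n - 2 * s)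
    (x : Euc n) (ε : ℝ) (hε : 0 < ε) (hε2 : ε < 1 / 2) :
    kap n s β * (1 + ‖x‖) ^ (-β - 2 * s) ≤
      ∫ z in {z | ε < ‖z‖}, (U n β x - U n β (x + z)) * ‖z‖ ^ (-(n : ℝ) - 2 * s) := by
  have : Nonempty (Fin n) := ⟨⟨0, hn⟩⟩
  obtain ⟨e, he, hxe⟩ : ∃ e : Euc n, ‖e‖ = 1 ∧ ‖x + e‖ = 1 + ‖x‖ := by
    by_cases hx : x = 0
    · obtain ⟨e, he⟩ := exists_norm_eq (Euc n) zero_le_one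
      exact ⟨e, he, by simp [hx, he]⟩
    · have hxp : 0 < ‖x‖ := norm_pos_iff.2 hx
      refine ⟨‖x‖⁻¹ • x, ?_, ?_⟩
      · rw [norm_smul, norm_inv, norm_norm, inv_mul_cancel₀ hxp.ne']
      · have : x + ‖x‖⁻¹ • x = (1 + ‖x‖⁻¹) • x := by rw [add_smul, one_smul]
        rw [this, norm_smul, Real.norm_of_nonneg (by positivity)]
        field_simp
        ring
  set g : Euc n → ℝ := fun z => (U n β x - U n β (x + z)) * ‖z‖ ^ (-(n : ℝ) - 2 * s) with hg
  have hmp := measurePreserving_sub_right (volume : Measure (Euc n)) (x + e)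
  have hemb : MeasurableEmbedding (fun w : Euc n => w - (x + e)) :=
    (MeasurableEquiv.subRight (x + e)).measurableEmbedding
  have h1 := hmp.setIntegral_preimage_emb hemb g {z | ε < ‖z‖}
  rw [← h1]
  refine core_s18 n hn s β hs hβ hβ2 (x + e) (1 + ‖x‖) hxe (by linarith [norm_nonneg x]) ε hε2 _ ?_ ?_
  · exact (hmp.integrableOn_comp_preimage hemb).2 (U_int n s β hs hβ x ε hε)
  · intro w hw
    simp only [hg]
    refine mul_le_mul_of_nonneg_right ?_ (by positivity)
    refine sub_le_sub le_rfl ?_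
    unfold U
    refine Real.rpow_le_rpow_of_nonpos (norm_pos_iff.2 hw) ?_ (by linarith)
    have h3 : x + (w - (x + e)) = w - e := by abel
    rw [h3]
    have := norm_add_le (w - e) e
    rw [sub_add_cancel] at this
    linarith

lemma pointwise2 (n : ℕ) (hn : 1 ≤ n) (s β : ℝ) (hs : 0 < s) (hβ : 0 < β) (hβ2 : β < n - 2 * s)
    (x : Euc n) (ε : ℝ) (hε : 0 < ε) (hε2 : ε < 1 / 2) :
    kap n s β * (1 + ‖x‖) ^ (-β - 2 * s) ≤
      ∫ z in {z | ε < ‖z‖}, (1 / 2 * D2 n (U n β) x z) * ‖z‖ ^ (-(n : ℝ) - 2 * s) := by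
  set g : Euc n → ℝ := fun z => (U n β x - U n β (x + z)) * ‖z‖ ^ (-(n : ℝ) - 2 * s) with hg
  have hp := pointwise n hn s β hs hβ hβ2 x ε hε hε2
  rw [← hg] at hp
  have hi : IntegrableOn g {z | ε < ‖z‖} := U_int n s β hs hβ x ε hε
  have hmp := Measure.measurePreserving_neg (volume : Measure (Euc n))
  have hemb : MeasurableEmbedding (Neg.neg : Euc n → Euc n) :=
    (MeasurableEquiv.neg (Euc n)).measurableEmbedding
  have hpre : Neg.neg ⁻¹' {z : Euc n | ε < ‖z‖} = {z | ε < ‖z‖} := by ext z; simp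
  have h1 := hmp.setIntegral_preimage_emb hemb g {z | ε < ‖z‖}
  have h2 := (hmp.integrableOn_comp_preimage hemb).2 hi
  rw [hpre] at h1 h2
  have h2' : IntegrableOn (fun z => g (-z)) {z | ε < ‖z‖} := h2
  have : ∫ z in {z | ε < ‖z‖}, (1 / 2 * D2 n (U n β) x z) * ‖z‖ ^ (-(n : ℝ) - 2 * s)
      = ∫ z in {z | ε < ‖z‖}, (1 / 2) * (g z + g (-z)) := by
    congr 1; ext z
    simp only [hg, D2, norm_neg, ← sub_eq_add_neg]; ring
  rw [this, integral_const_mul, integral_add hi h2', h1]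
  linarith

lemma weak (n : ℕ) (hn : 1 ≤ n) (s β : ℝ) (hs : 0 < s) (hs1 : s < 1) (hβ : 0 < β) (hβ2 : β < n - 2 * s)
    (φ : Euc n → ℝ) (h : IsTestFun n φ) (hφ : ∀ x, 0 ≤ φ x) :
    ∫ x : Euc n, φ x * (kap n s β * (1 + ‖x‖) ^ (-β - 2 * s)) ≤
      ∫ x : Euc n, U n β x * LK n (fun z : Euc n => ‖z‖ ^ (-(n : ℝ) - 2 * s)) φ x := by
  have hc : Continuous φ := h.1.continuous
  have hi : Integrable φ := hc.integrable_of_hasCompactSupport h.2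
  have hU := U_cont n β
  have : Nonempty (Fin n) := ⟨⟨0, hn⟩⟩
  set k : Euc n → ℝ := fun z => ‖z‖ ^ (-(n : ℝ) - 2 * s) with hk
  have hJ : Integrable (fun p : Euc n × Euc n => (1 / 2 * U n β p.1) * (D2 n φ p.1 p.2 * k p.2))
      (volume.prod volume) := by
    refine Integrable.bdd_mul (c := 1) (joint_int n hn s hs hs1 φ h)
      (Continuous.aestronglyMeasurable (by fun_prop)) (.of_forall fun p => ?_)
    have := U_le n β hβ p.1
    have := U_pos n β p.1
    rw [Real.norm_of_nonneg (by positivity)]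
    linarith
  have e1 : ∫ x : Euc n, U n β x * LK n k φ x =
      ∫ z : Euc n, ∫ x : Euc n, (1 / 2 * U n β x) * (D2 n φ x z * k z) := by
    rw [← integral_integral_swap hJ]
    congr 1; ext x
    rw [integral_const_mul, LK]
    simp only [D2]; ring
  have e2 : ∀ z : Euc n, ∫ x : Euc n, (1 / 2 * U n β x) * (D2 n φ x z * k z) =
      ∫ x : Euc n, (φ x * k z) * (1 / 2 * D2 n (U n β) x z) := by
    intro z
    have b : ∀ y : Euc n, Integrable (fun x => φ x * U n β (x + y)) := by
      intro y
      refine hi.mul_bdd (c := 1) (Continuous.aestronglyMeasurable (by fun_prop)) (.of_forall fun p => ?_)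
      rw [Real.norm_of_nonneg (U_pos n β _).le]
      exact U_le n β hβ _
    have b0 : Integrable (fun x => φ x * U n β x) := by simpa using b 0
    have b1 := b z
    have b2 : Integrable (fun x => φ x * U n β (x - z)) := by simpa [sub_eq_add_neg] using b (-z)
    have b1' := b1.comp_sub_right z
    have b2' := b2.comp_add_right z
    simp only [sub_add_cancel, add_sub_cancel_right] at b1' b2'
    have t1 := integral_sub_right_eq_self (μ := (volume : Measure (Euc n))) (fun x => φ x * U n β (x + z)) z
    have t2 := integral_add_right_eq_self (μ := (volume : Measure (Euc n))) (fun x => φ x * U n β (x - z)) z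
    simp only [sub_add_cancel, add_sub_cancel_right] at t1 t2
    have l : ∫ x : Euc n, (1 / 2 * U n β x) * (D2 n φ x z * k z) =
        ∫ x : Euc n, (k z / 2) * ((2 * (φ x * U n β x) - φ (x + z) * U n β x) - φ (x - z) * U n β x) := by
      congr 1; ext x; simp only [D2]; ring
    have r : ∫ x : Euc n, (φ x * k z) * (1 / 2 * D2 n (U n β) x z) =
        ∫ x : Euc n, (k z / 2) * ((2 * (φ x * U n β x) - φ x * U n β (x + z)) - φ x * U n β (x - z)) := by
      congr 1; ext x; simp only [D2]; ring
    have c0 := b0.const_mul 2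
    have i1 : Integrable (fun x => 2 * (φ x * U n β x) - φ (x + z) * U n β x) := c0.sub b2'
    have i2 : Integrable (fun x => 2 * (φ x * U n β x) - φ x * U n β (x + z)) := c0.sub b1
    rw [l, r, integral_const_mul, integral_const_mul, integral_sub i1 b1', integral_sub c0 b2',
      integral_sub i2 b2, integral_sub c0 b1, t1, t2]
    ring
  have hG : Integrable (fun z : Euc n => ∫ x : Euc n, (1 / 2 * U n β x) * (D2 n φ x z * k z)) :=
    hJ.integral_prod_right
  set G : Euc n → ℝ := fun z : Euc n => ∫ x : Euc n, (1 / 2 * U n β x) * (D2 n φ x z * k z) with hGdef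
  set S : ℕ → Set (Euc n) := fun m => {z | 1 / ((m:ℝ) + 3) < ‖z‖} with hS
  have hSm : ∀ m, MeasurableSet (S m) := fun m => measurableSet_lt measurable_const measurable_norm
  have hmono : Monotone S := by
    intro i j hij z hz
    have hij' : (i:ℝ) ≤ j := by exact_mod_cast hij
    refine lt_of_le_of_lt ?_ (show 1 / ((i:ℝ) + 3) < ‖z‖ from hz)
    gcongr
  have hUn : ⋃ m, S m = {0}ᶜ := by
    ext z
    simp only [Set.mem_iUnion, Set.mem_compl_iff, Set.mem_singleton_iff]
    constructor
    · rintro ⟨m, hm⟩ rfl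
      have hm' : 1 / ((m:ℝ) + 3) < ‖(0 : Euc n)‖ := hm
      rw [norm_zero] at hm'
      have : (0:ℝ) < 1 / ((m:ℝ) + 3) := by positivity
      linarith
    · intro hz
      obtain ⟨m, hm⟩ := exists_nat_one_div_lt (norm_pos_iff.2 hz)
      refine ⟨m, lt_trans ?_ hm⟩
      gcongr
      norm_num
  have hlim := tendsto_setIntegral_of_monotone (f := G) (μ := volume) hSm hmono hG.integrableOn
  rw [hUn, restrict_compl_singleton] at hlim
  rw [e1]
  refine ge_of_tendsto' hlim fun m => ?_
  have hε : (0:ℝ) < 1 / ((m:ℝ) + 3) := by positivity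
  have hε2 : 1 / ((m:ℝ) + 3) < 1 / 2 := by gcongr; linarith [Nat.cast_nonneg (α := ℝ) m]
  have hH : Integrable (fun p : Euc n × Euc n => (φ p.1 * k p.2) * (1 / 2 * D2 n (U n β) p.1 p.2))
      (volume.prod (volume.restrict (S m))) := by
    refine Integrable.mul_bdd (c := 2) (hi.mul_prod (K_tail n s hs _ hε)) ?_ (.of_forall fun p => ?_)
    · unfold D2
      exact Continuous.aestronglyMeasurable (by fun_prop)
    · have := U_le n β hβ p.1
      have := U_le n β hβ (p.1 + p.2)
      have := U_le n β hβ (p.1 - p.2)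
      have := U_pos n β p.1
      have := U_pos n β (p.1 + p.2)
      have := U_pos n β (p.1 - p.2)
      rw [Real.norm_eq_abs, abs_le, D2]
      constructor <;> linarith
  have e3 : ∫ z in S m, G z = ∫ x, ∫ z in S m, (φ x * k z) * (1 / 2 * D2 n (U n β) x z) := by
    refine Eq.trans ?_ (integral_integral_swap (f := fun x z => (φ x * k z) * (1 / 2 * D2 n (U n β) x z)) hH).symm
    congr 1; ext z
    exact e2 z
  rw [e3]
  refine integral_mono ?_ hH.integral_prod_left fun x => ?_
  · refine hi.mul_bdd (c := kap n s β) ?_ (.of_forall fun x => ?_)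
    · refine Continuous.aestronglyMeasurable (Continuous.mul continuous_const ?_)
      refine Continuous.rpow_const (by fun_prop) fun x => Or.inl ?_
      positivity
    · have hk0 := kap_pos n s β hβ hβ2
      rw [Real.norm_of_nonneg (by positivity)]
      have : (1 + ‖x‖) ^ (-β - 2 * s) ≤ 1 :=
        Real.rpow_le_one_of_one_le_of_nonpos (by linarith [norm_nonneg x]) (by linarith)
      nlinarith
  · have := pointwise2 n hn s β hs hβ hβ2 x _ hε hε2
    have := mul_le_mul_of_nonneg_left this (hφ x)
    refine this.trans (le_of_eq ?_)
    show _ = ∫ z in S m, (φ x * k z) * (1 / 2 * D2 n (U n β) x z)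
    rw [← integral_const_mul]
    congr 1; ext z; simp only [hk]; ring

/-- Sharpness of the Serrin exponent: for `q > n/(n-2s)` and the fractional
Laplacian kernel `K(z) = |z|^{-n-2s}`, the function `u(x) = c(1+|x|)^{-2s/(q-1)}` is a positive
weak supersolution of `L_K u = u^q` for a sufficiently small constant `c > 0`. -/
theorem serrin_exponent_sharp
    (n : ℕ) (hn : 1 ≤ n) (s : ℝ) (hs : s ∈ Set.Ioo (0 : ℝ) 1)
    (hns : 2 * s < (n : ℝ))
    (q : ℝ) (hq : (n : ℝ) / ((n : ℝ) - 2 * s) < q) :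
    ∃ c : ℝ, 0 < c ∧
      (∀ x : Euc n, 0 < c * (1 + ‖x‖) ^ (-(2 * s) / (q - 1))) ∧
      IsWeakSupersol n s q (fun z : Euc n => ‖z‖ ^ (-(n : ℝ) - 2 * s))
        (fun x : Euc n => c * (1 + ‖x‖) ^ (-(2 * s) / (q - 1))) := by 
  obtain ⟨hs0, hs1⟩ := hs
  have hd : 0 < (n:ℝ) - 2 * s := by linarith
  rw [div_lt_iff₀ hd] at hq
  have hq1 : 1 < q := by
    by_contra hcon
    push Not at hcon
    nlinarith
  have hq0 : 0 < q - 1 := by linarith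
  set β : ℝ := 2 * s / (q - 1) with hβdef
  have hβ : 0 < β := by positivity
  have hβ2 : β < n - 2 * s := by
    rw [hβdef, div_lt_iff₀ hq0]; nlinarith
  have hβq : β * q = β + 2 * s := by
    rw [hβdef]; field_simp; ring
  have hk := kap_pos n s β hβ hβ2
  set c : ℝ := kap n s β ^ (1 / (q - 1)) with hc
  have hc0 : 0 < c := by positivity
  have hcq : c ^ q = c * kap n s β := by
    have : c ^ (q - 1) = kap n s β := by
      rw [hc, ← Real.rpow_mul hk.le, one_div_mul_cancel hq0.ne', Real.rpow_one]
    rw [← this, ← Real.rpow_one_add' hc0.le (by linarith)]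
    congr 1; ring
  have hu : (fun x : Euc n => c * (1 + ‖x‖) ^ (-(2 * s) / (q - 1))) = fun x => c * U n β x := by
    ext x; rw [U, hβdef, neg_div]
  have hUc := U_cont n β
  have hcont : Continuous (fun x => c * U n β x) := by fun_prop
  refine ⟨c, hc0, fun x => by positivity, ?_⟩
  rw [hu]
  refine ⟨hcont.measurable, fun x => (mul_pos hc0 (U_pos n β x)).le, ?_, ⟨hcont.locallyIntegrable, ?_⟩, ?_⟩
  · intro R hR
    have h2 : Continuous (fun x => (c * U n β x) ^ q) :=
      hcont.rpow_const fun x => Or.inl (mul_pos hc0 (U_pos n β x)).ne'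
    exact (h2.continuousOn.integrableOn_compact (isCompact_closedBall (0 : Euc n) R)).mono_set
      ball_subset_closedBall
  · have h1 : Integrable (fun z : Euc n => (1 + ‖z‖) ^ (-((n:ℝ) + 2 * s))) volume :=
      integrable_one_add_norm (by simp; linarith)
    rw [show -((n:ℝ) + 2 * s) = -(n:ℝ) - 2 * s by ring] at h1
    refine h1.bdd_mul (c := c) (Continuous.aestronglyMeasurable (by fun_prop)) (.of_forall fun x => ?_)
    rw [Real.norm_eq_abs, abs_abs, abs_of_pos (mul_pos hc0 (U_pos n β x))]
    nlinarith [U_le n β hβ x]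
  · intro φ h hφ
    have hw := weak n hn s β hs0 hs1 hβ hβ2 φ h hφ
    have l : ∫ x : Euc n, (c * U n β x) ^ q * φ x =
        c * ∫ x : Euc n, φ x * (kap n s β * (1 + ‖x‖) ^ (-β - 2 * s)) := by
      rw [← integral_const_mul]
      congr 1; ext x
      rw [Real.mul_rpow hc0.le (U_pos n β x).le, hcq, U, ← Real.rpow_mul (by positivity),
        show -β * q = -β - 2 * s by linarith]
      ring
    have r : ∫ x : Euc n, c * U n β x * LK n (fun z : Euc n => ‖z‖ ^ (-(n : ℝ) - 2 * s)) φ x =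
        c * ∫ x : Euc n, U n β x * LK n (fun z : Euc n => ‖z‖ ^ (-(n : ℝ) - 2 * s)) φ x := by
      rw [← integral_const_mul]
      congr 1; ext x; ring
    rw [l, r]
    exact mul_le_mul_of_nonneg_left hw hc0.le
end
end
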